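/- (Costa's entropy power inequality, interpolation form) Let X be a real random variable with probability density f_X, finite second moment, and finite differential entropy, and let W be an independent standard Gaussian. For a ∈ [0,1] let N(a) = (1/(2πe)) exp(2h(a)), where h(a) is the differential entropy of X + √a·W (h(0) = h(X)). Then for every a ∈ [0,1], N(a) ≥ (1−a)·N(0) + a·N(1); that is, the entropy power of X + √a·W is at least the linear interpolation between the entropy powers of X and X + W. -/

import Mathlib

open MeasureTheory Filter

namespace CostaEPI

/-- Gaussian kernel of variance `a`. -/
noncomputable def ph (a z : ℝ) : ℝ :=
  (Real.sqrt (2 * Real.pi * a))⁻¹ * Real.exp (-z ^ 2 / (2 * a))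

/-- Kernel with a monomial weight. -/
noncomputable def mk (k : ℕ) (a z : ℝ) : ℝ := z ^ k * ph a z

/-- Unnormalised conditional moments. -/
noncomputable def M (f : ℝ → ℝ) (k : ℕ) (a y : ℝ) : ℝ := ∫ x, f x * mk k a (y - x)

lemma sqrt_pos' {a : ℝ} (ha : 0 < a) : 0 < Real.sqrt (2 * Real.pi * a) :=
  Real.sqrt_pos.mpr (by positivity)

lemma ph_pos {a : ℝ} (ha : 0 < a) (z : ℝ) : 0 < ph a z := by
  have := sqrt_pos' ha
  unfold ph; positivity

lemma ph_cont (a : ℝ) : Continuous (ph a) := by unfold ph; fun_prop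

lemma mk_cont (k : ℕ) (a : ℝ) : Continuous (mk k a) := by
  unfold mk; exact (continuous_pow k).mul (ph_cont a)

lemma mk_zero (a z : ℝ) : mk 0 a z = ph a z := by simp [mk]

lemma ph_eq_pdf {a : ℝ} (ha : 0 < a) :
    ph a = ProbabilityTheory.gaussianPDFReal 0 ⟨a, ha.le⟩ := by
  funext z
  simp only [ph, ProbabilityTheory.gaussianPDFReal, sub_zero]
  rfl

lemma ph_integrable {a : ℝ} (ha : 0 < a) : Integrable (ph a) := by
  rw [ph_eq_pdf ha]
  exact ProbabilityTheory.integrable_gaussianPDFReal _ _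

lemma ph_integral {a : ℝ} (ha : 0 < a) : ∫ z, ph a z = 1 := by
  rw [ph_eq_pdf ha]
  apply ProbabilityTheory.integral_gaussianPDFReal_eq_one
  intro h
  have := congrArg NNReal.toReal h
  exact ha.ne' this

lemma ph_le {a : ℝ} (ha : 0 < a) (z : ℝ) : ph a z ≤ (Real.sqrt (2 * Real.pi * a))⁻¹ := by
  unfold ph
  have h1 := sqrt_pos' ha
  have : Real.exp (-z ^ 2 / (2 * a)) ≤ 1 := by
    apply Real.exp_le_one_iff.mpr
    apply div_nonpos_of_nonpos_of_nonneg
    · nlinarith [sq_nonneg z]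
    · positivity
  calc _ ≤ (Real.sqrt (2 * Real.pi * a))⁻¹ * 1 := by gcongr
    _ = _ := by ring

lemma mk_bound (k : ℕ) (a0 a1 : ℝ) (h0 : 0 < a0) (h1 : a0 ≤ a1) :
    ∃ C : ℝ, 0 < C ∧ ∀ a, a0 ≤ a → a ≤ a1 → ∀ z, |mk k a z| ≤ C * ph (2 * a1) z := by
  have ha1 : 0 < a1 := lt_of_lt_of_le h0 h1
  have s0 := sqrt_pos' h0
  have s1 : 0 < Real.sqrt (2 * Real.pi * (2 * a1)) := sqrt_pos' (by positivity)
  refine ⟨k.factorial * Real.exp a1 * Real.sqrt (2 * Real.pi * (2 * a1)) *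
    (Real.sqrt (2 * Real.pi * a0))⁻¹, by positivity, ?_⟩
  intro a ha ha' z
  have hapos : 0 < a := lt_of_lt_of_le h0 ha
  have sa := sqrt_pos' hapos
  have e1 : |mk k a z| = |z| ^ k * ((Real.sqrt (2 * Real.pi * a))⁻¹ *
      Real.exp (-z ^ 2 / (2 * a))) := by
    unfold mk
    rw [abs_mul, abs_pow, abs_of_pos (ph_pos hapos z)]; rfl
  have e2 : |z| ^ k ≤ k.factorial * Real.exp |z| := by
    have := Real.pow_div_factorial_le_exp |z| (abs_nonneg z) k
    rw [div_le_iff₀ (by positivity)] at this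
    linarith
  have e3 : (Real.sqrt (2 * Real.pi * a))⁻¹ ≤ (Real.sqrt (2 * Real.pi * a0))⁻¹ := by
    gcongr
  have e4 : Real.exp |z| * Real.exp (-z ^ 2 / (2 * a)) ≤
      Real.exp a1 * Real.exp (-z ^ 2 / (2 * (2 * a1))) := by
    rw [← Real.exp_add, ← Real.exp_add]
    apply Real.exp_le_exp.mpr
    have t1 : -z ^ 2 / (2 * a) ≤ -z ^ 2 / (2 * a1) := by
      rw [neg_div, neg_div]
      apply neg_le_neg
      gcongr
    have t2 : |z| ≤ a1 + z ^ 2 / (4 * a1) := by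
      have : a1 + z ^ 2 / (4 * a1) - |z| = (2 * a1 - |z|) ^ 2 / (4 * a1) := by
        rw [← sq_abs z]; field_simp; ring
      have h : 0 ≤ (2 * a1 - |z|) ^ 2 / (4 * a1) := by positivity
      linarith
    have t3 : -z ^ 2 / (2 * a1) + z ^ 2 / (4 * a1) = -z ^ 2 / (2 * (2 * a1)) := by
      field_simp; ring
    linarith
  rw [e1]
  calc |z| ^ k * ((Real.sqrt (2 * Real.pi * a))⁻¹ * Real.exp (-z ^ 2 / (2 * a)))
      ≤ (k.factorial * Real.exp |z|) * ((Real.sqrt (2 * Real.pi * a0))⁻¹ *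
        Real.exp (-z ^ 2 / (2 * a))) := by gcongr
    _ = k.factorial * (Real.sqrt (2 * Real.pi * a0))⁻¹ *
        (Real.exp |z| * Real.exp (-z ^ 2 / (2 * a))) := by ring
    _ ≤ k.factorial * (Real.sqrt (2 * Real.pi * a0))⁻¹ *
        (Real.exp a1 * Real.exp (-z ^ 2 / (2 * (2 * a1)))) := by gcongr
    _ = _ := by
      unfold ph; field_simp

lemma mk_const_bound (k : ℕ) (a0 a1 : ℝ) (h0 : 0 < a0) (h1 : a0 ≤ a1) :
    ∃ C : ℝ, 0 < C ∧ ∀ a, a0 ≤ a → a ≤ a1 → ∀ z, |mk k a z| ≤ C := by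
  obtain ⟨C, hC, h⟩ := mk_bound k a0 a1 h0 h1
  have ha1 : 0 < 2 * a1 := by linarith
  have := sqrt_pos' ha1
  refine ⟨C * (Real.sqrt (2 * Real.pi * (2 * a1)))⁻¹, by positivity, ?_⟩
  intro a ha ha' z
  refine (h a ha ha' z).trans ?_
  have := ph_le ha1 z
  gcongr

lemma mk_integrable (k : ℕ) {a : ℝ} (ha : 0 < a) : Integrable (mk k a) := by
  obtain ⟨C, hC, h⟩ := mk_bound k a a ha le_rfl
  apply Integrable.mono' ((ph_integrable (a := 2 * a) (by positivity)).const_mul C)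
    (mk_cont k a).aestronglyMeasurable
  exact ae_of_all _ (fun z => h a le_rfl le_rfl z)

lemma mul_mk_integrable {f : ℝ → ℝ} (hf : Integrable f) (k : ℕ) {a : ℝ} (ha : 0 < a) (y : ℝ) :
    Integrable (fun x => f x * mk k a (y - x)) := by
  obtain ⟨C, hC, h⟩ := mk_const_bound k a a ha le_rfl
  have := hf.bdd_mul (f := fun x => mk k a (y - x)) (c := C)
    ((mk_cont k a).comp (by fun_prop)).aestronglyMeasurable
    (ae_of_all _ (fun x => h a le_rfl le_rfl _))
  simpa only [mul_comm] using this

lemma M_eq_conv (f : ℝ → ℝ) (k : ℕ) (a : ℝ) :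
    M f k a = convolution f (mk k a) (ContinuousLinearMap.mul ℝ ℝ) volume := by
  funext y
  simp [M, convolution_def]

lemma M_integrable {f : ℝ → ℝ} (hf : Integrable f) (k : ℕ) {a : ℝ} (ha : 0 < a) :
    Integrable (M f k a) := by
  rw [M_eq_conv]
  exact hf.integrable_convolution _ (mk_integrable k ha)

lemma M_integral {f : ℝ → ℝ} (hf : Integrable f) {a : ℝ} (ha : 0 < a) :
    ∫ y, M f 0 a y = ∫ x, f x := by
  rw [M_eq_conv, integral_convolution _ hf (mk_integrable 0 ha)]
  have : ∫ z, mk 0 a z = 1 := by simp only [mk_zero]; exact ph_integral ha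
  rw [this]; simp

lemma ph_deriv_z {a : ℝ} (ha : 0 < a) (z : ℝ) : HasDerivAt (ph a) (-(z / a) * ph a z) z := by
  unfold ph
  have h1 : HasDerivAt (fun z : ℝ => -z ^ 2 / (2 * a)) (-(z / a)) z := by
    have := ((hasDerivAt_pow 2 z).neg).div_const (2 * a)
    refine this.congr_deriv ?_
    field_simp
    norm_num
  refine ((h1.exp).const_mul ((Real.sqrt (2 * Real.pi * a))⁻¹)).congr_deriv ?_
  ring

lemma ph_deriv_a {a : ℝ} (ha : 0 < a) (z : ℝ) :
    HasDerivAt (fun a => ph a z) ((z ^ 2 / (2 * a ^ 2) - 1 / (2 * a)) * ph a z) a := by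
  unfold ph
  have hs := sqrt_pos' ha
  have h1 : HasDerivAt (fun a : ℝ => -z ^ 2 / (2 * a)) (z ^ 2 / (2 * a ^ 2)) a := by
    have := (hasDerivAt_const a (-z ^ 2)).div ((hasDerivAt_id a).const_mul 2) (by simp; linarith)
    refine this.congr_deriv ?_
    simp; field_simp
  have h2 : HasDerivAt (fun a : ℝ => (Real.sqrt (2 * Real.pi * a))⁻¹)
      (-(1 / (2 * a)) * (Real.sqrt (2 * Real.pi * a))⁻¹) a := by
    have h3 : HasDerivAt (fun a : ℝ => 2 * Real.pi * a) (2 * Real.pi) a := by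
      simpa using (hasDerivAt_id a).const_mul (2 * Real.pi)
    have := (h3.sqrt (by positivity)).inv hs.ne'
    refine this.congr_deriv ?_
    rw [Real.sq_sqrt (by positivity)]
    field_simp
  refine (h2.mul h1.exp).congr_deriv ?_
  ring

lemma mk_deriv_z (k : ℕ) {a : ℝ} (ha : 0 < a) (z : ℝ) :
    HasDerivAt (mk k a) (k * mk (k - 1) a z - mk (k + 1) a z / a) z := by
  unfold mk
  refine ((hasDerivAt_pow k z).mul (ph_deriv_z ha z)).congr_deriv ?_
  field_simp
  ring

lemma mk_deriv_a (k : ℕ) {a : ℝ} (ha : 0 < a) (z : ℝ) :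
    HasDerivAt (fun a => mk k a z) (mk (k + 2) a z / (2 * a ^ 2) - mk k a z / (2 * a)) a := by
  unfold mk
  refine ((ph_deriv_a ha z).const_mul (z ^ k)).congr_deriv ?_
  ring

lemma M_deriv_y {f : ℝ → ℝ} (hf : Integrable f) (k : ℕ) {a : ℝ} (ha : 0 < a) (y : ℝ) :
    HasDerivAt (M f k a) (k * M f (k - 1) a y - M f (k + 1) a y / a) y := by
  obtain ⟨C1, hC1, h1⟩ := mk_const_bound (k - 1) a a ha le_rfl
  obtain ⟨C2, hC2, h2⟩ := mk_const_bound (k + 1) a a ha le_rfl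
  have key := hasDerivAt_integral_of_dominated_loc_of_deriv_le (μ := volume) (x₀ := y)
    (s := Set.univ)
    (F := fun y x => f x * mk k a (y - x))
    (F' := fun y x => f x * (k * mk (k - 1) a (y - x) - mk (k + 1) a (y - x) / a))
    (bound := fun x => |f x| * (k * C1 + C2 / a)) univ_mem
    (Eventually.of_forall (fun y => (mul_mk_integrable hf k ha y).aestronglyMeasurable))
    (mul_mk_integrable hf k ha y)
    (hf.aestronglyMeasurable.mul (Continuous.aestronglyMeasurable (by
      have := mk_cont (k - 1) a
      have := mk_cont (k + 1) a
      fun_prop)))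
    (ae_of_all _ (fun x y _ => by
      rw [Real.norm_eq_abs, abs_mul]
      gcongr
      refine (abs_sub _ _).trans ?_
      rw [abs_mul, abs_div, abs_of_pos ha, Nat.abs_cast]
      have := h1 a le_rfl le_rfl (y - x)
      have := h2 a le_rfl le_rfl (y - x)
      gcongr))
    (hf.abs.mul_const _)
    (ae_of_all _ (fun x y _ => by
      have h := (mk_deriv_z k ha (y - x)).comp y ((hasDerivAt_id y).sub_const x)
      simpa using h.const_mul (f x)))
  refine key.2.congr_deriv ?_
  symm
  unfold M
  rw [← integral_const_mul, ← integral_div, ← integral_sub]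
  · congr 1; funext x; ring
  · exact (mul_mk_integrable hf _ ha y).const_mul _
  · exact (mul_mk_integrable hf _ ha y).div_const _

lemma M_deriv_a {f : ℝ → ℝ} (hf : Integrable f) (k : ℕ) {a : ℝ} (ha : 0 < a) (y : ℝ) :
    HasDerivAt (fun a => M f k a y) (M f (k + 2) a y / (2 * a ^ 2) - M f k a y / (2 * a)) a := by
  obtain ⟨C1, hC1, h1⟩ := mk_const_bound (k + 2) (a / 2) (2 * a) (by positivity) (by linarith)
  obtain ⟨C2, hC2, h2⟩ := mk_const_bound k (a / 2) (2 * a) (by positivity) (by linarith)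
  have hev : ∀ᶠ b in nhds a, 0 < b := lt_mem_nhds ha
  have key := hasDerivAt_integral_of_dominated_loc_of_deriv_le (μ := volume) (x₀ := a)
    (s := Set.Icc (a / 2) (2 * a))
    (F := fun a x => f x * mk k a (y - x))
    (F' := fun a x => f x * (mk (k + 2) a (y - x) / (2 * a ^ 2) - mk k a (y - x) / (2 * a)))
    (bound := fun x => |f x| * (C1 / (2 * (a / 2) ^ 2) + C2 / (2 * (a / 2))))
    (Icc_mem_nhds (by linarith) (by linarith))
    (hev.mono (fun b hb => (mul_mk_integrable hf k hb y).aestronglyMeasurable))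
    (mul_mk_integrable hf k ha y)
    (hf.aestronglyMeasurable.mul (Continuous.aestronglyMeasurable (by
      have := mk_cont (k + 2) a
      have := mk_cont k a
      fun_prop)))
    (ae_of_all _ (fun x b hb => by
      have hb0 : 0 < b := by have := hb.1; linarith
      rw [Real.norm_eq_abs, abs_mul]
      gcongr
      refine (abs_sub _ _).trans ?_
      rw [abs_div, abs_div, abs_of_pos (show 0 < 2 * b ^ 2 by positivity),
        abs_of_pos (show 0 < 2 * b by positivity)]
      have := h1 b hb.1 hb.2 (y - x)
      have := h2 b hb.1 hb.2 (y - x)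
      have := hb.1
      gcongr))
    (hf.abs.mul_const _)
    (ae_of_all _ (fun x b hb => by
      have hb0 : 0 < b := by have := hb.1; linarith
      exact (mk_deriv_a k hb0 (y - x)).const_mul (f x)))
  refine key.2.congr_deriv ?_
  symm
  unfold M
  rw [← integral_div, ← integral_div, ← integral_sub]
  · congr 1; funext x; ring
  · exact (mul_mk_integrable hf _ ha y).div_const _
  · exact (mul_mk_integrable hf _ ha y).div_const _

/-- The standing assumptions on the density. -/
structure Dens (f : ℝ → ℝ) : Prop where
  nn : ∀ x, 0 ≤ f x
  int : Integrable f
  one : ∫ x, f x = 1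
  mom : Integrable (fun x => x ^ 2 * f x)

lemma M_bound {f : ℝ → ℝ} (H : Dens f) (k : ℕ) (a0 a1 : ℝ) (h0 : 0 < a0) (h1 : a0 ≤ a1) :
    ∃ C : ℝ, 0 < C ∧ ∀ a, a0 ≤ a → a ≤ a1 → ∀ y, |M f k a y| ≤ C * M f 0 (2 * a1) y := by
  obtain ⟨C, hC, h⟩ := mk_bound k a0 a1 h0 h1
  refine ⟨C, hC, fun a ha ha' y => ?_⟩
  have hap : 0 < a := by linarith
  have ha1 : 0 < 2 * a1 := by linarith
  unfold M
  rw [← integral_const_mul]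
  refine (abs_integral_le_integral_abs).trans ?_
  refine integral_mono (mul_mk_integrable H.int k hap y).abs
    ((mul_mk_integrable H.int 0 ha1 y).const_mul C) (fun x => ?_)
  simp only
  rw [abs_mul, abs_of_nonneg (H.nn x), mk_zero]
  have := mul_le_mul_of_nonneg_left (h a ha ha' (y - x)) (H.nn x)
  linarith

lemma fx_int {f : ℝ → ℝ} (H : Dens f) : Integrable (fun x => x * f x) := by
  refine Integrable.mono' (H.int.add H.mom)
    (continuous_id.aestronglyMeasurable.mul H.int.aestronglyMeasurable) (ae_of_all _ fun x => ?_)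
  simp only [Real.norm_eq_abs, Pi.add_apply]
  rw [abs_mul, abs_of_nonneg (H.nn x)]
  have := H.nn x
  have h2 : |x| ≤ 1 + x ^ 2 := by
    rw [abs_le]; constructor <;> nlinarith [sq_nonneg (x - 1), sq_nonneg (x + 1)]
  nlinarith

lemma M0_lower {f : ℝ → ℝ} (H : Dens f) {a : ℝ} (ha : 0 < a) (y : ℝ) :
    (Real.sqrt (2 * Real.pi * a))⁻¹ * Real.exp (-(y ^ 2 + ∫ x, x ^ 2 * f x) / a) ≤ M f 0 a y := by
  have hs := sqrt_pos' ha
  set m := -(y ^ 2 + ∫ x, x ^ 2 * f x) / a with hm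
  set K := (Real.sqrt (2 * Real.pi * a))⁻¹ with hK
  have hKp : 0 < K := by positivity
  have e : ∫ x, K * Real.exp m * (f x * (1 - m - y ^ 2 / a) - x ^ 2 * f x / a) = K * Real.exp m := by
    rw [integral_const_mul, integral_sub, integral_mul_const, integral_div, H.one, hm]
    · field_simp; ring
    · exact H.int.mul_const _
    · exact H.mom.div_const _
  rw [← e]
  unfold M
  refine integral_mono ?_ (mul_mk_integrable H.int 0 ha y) (fun x => ?_)
  · exact ((H.int.mul_const _).sub (H.mom.div_const _)).const_mul _
  simp only
  rw [mk_zero]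
  unfold ph
  rw [← hK]
  set t := -(y - x) ^ 2 / (2 * a) with ht
  have h1 : Real.exp m * (1 + (t - m)) ≤ Real.exp t := by
    have := Real.add_one_le_exp (t - m)
    calc _ ≤ Real.exp m * Real.exp (t - m) := by gcongr; linarith
      _ = _ := by rw [← Real.exp_add]; ring_nf
  have h2 : -(y ^ 2 / a + x ^ 2 / a) ≤ t := by
    have : t + (y ^ 2 / a + x ^ 2 / a) = (y + x) ^ 2 / (2 * a) := by
      rw [ht]; field_simp; ring
    have : 0 ≤ (y + x) ^ 2 / (2 * a) := by positivity
    linarith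
  have h3 : Real.exp m * (1 - m - y ^ 2 / a - x ^ 2 / a) ≤ Real.exp t := by
    refine le_trans ?_ h1
    gcongr; linarith
  have := mul_le_mul_of_nonneg_left h3 (mul_nonneg hKp.le (H.nn x))
  calc _ = K * f x * (Real.exp m * (1 - m - y ^ 2 / a - x ^ 2 / a)) := by ring
    _ ≤ K * f x * Real.exp t := this
    _ = _ := by ring

lemma M0_pos {f : ℝ → ℝ} (H : Dens f) {a : ℝ} (ha : 0 < a) (y : ℝ) : 0 < M f 0 a y := by
  have hs := sqrt_pos' ha
  exact lt_of_lt_of_le (by positivity) (M0_lower H ha y)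

lemma M0_upper {f : ℝ → ℝ} (H : Dens f) {a : ℝ} (ha : 0 < a) (y : ℝ) :
    M f 0 a y ≤ (Real.sqrt (2 * Real.pi * a))⁻¹ := by
  have : ∫ x, f x * (Real.sqrt (2 * Real.pi * a))⁻¹ = (Real.sqrt (2 * Real.pi * a))⁻¹ := by
    rw [integral_mul_const, H.one, one_mul]
  rw [← this]
  refine integral_mono (mul_mk_integrable H.int 0 ha y) (H.int.mul_const _) (fun x => ?_)
  simp only
  rw [mk_zero]
  exact mul_le_mul_of_nonneg_left (ph_le ha _) (H.nn x)

lemma logM_bound {f : ℝ → ℝ} (H : Dens f) (a0 a1 : ℝ) (h0 : 0 < a0) (h1 : a0 ≤ a1) :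
    ∃ C : ℝ, 0 < C ∧ ∀ a, a0 ≤ a → a ≤ a1 → ∀ y, |Real.log (M f 0 a y)| ≤ C * (1 + y ^ 2) := by
  set m2 := ∫ x, x ^ 2 * f x with hm2
  have hm2n : 0 ≤ m2 := integral_nonneg (fun x => mul_nonneg (sq_nonneg x) (H.nn x))
  have ha1 : 0 < a1 := by linarith
  set L := |Real.log (Real.sqrt (2 * Real.pi * a0))| + |Real.log (Real.sqrt (2 * Real.pi * a1))|
    with hL
  have hLn : 0 ≤ L := by positivity
  refine ⟨L + (1 + m2) / a0, by positivity, fun a ha ha' y => ?_⟩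
  have hap : 0 < a := by linarith
  have s0 := sqrt_pos' h0
  have s := sqrt_pos' hap
  have s1 := sqrt_pos' ha1
  have hlo := Real.log_le_log (by positivity) (M0_lower H hap y)
  have hup := Real.log_le_log (M0_pos H hap y) (M0_upper H hap y)
  rw [Real.log_mul (by positivity) (by positivity), Real.log_exp, Real.log_inv, ← hm2] at hlo
  rw [Real.log_inv] at hup
  have l0 : Real.log (Real.sqrt (2 * Real.pi * a0)) ≤ Real.log (Real.sqrt (2 * Real.pi * a)) := by
    apply Real.log_le_log s0; gcongr
  have l1 : Real.log (Real.sqrt (2 * Real.pi * a)) ≤ Real.log (Real.sqrt (2 * Real.pi * a1)) := by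
    apply Real.log_le_log s; gcongr
  have b0 := neg_abs_le (Real.log (Real.sqrt (2 * Real.pi * a0)))
  have b1 := le_abs_self (Real.log (Real.sqrt (2 * Real.pi * a1)))
  have c0 := abs_nonneg (Real.log (Real.sqrt (2 * Real.pi * a0)))
  have c1 := abs_nonneg (Real.log (Real.sqrt (2 * Real.pi * a1)))
  have hq : (y ^ 2 + m2) / a ≤ (y ^ 2 + m2) / a0 := by gcongr
  have hq2 : (y ^ 2 + m2) / a0 ≤ (1 + m2) / a0 * (1 + y ^ 2) := by
    rw [div_mul_eq_mul_div]
    gcongr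
    nlinarith [mul_nonneg hm2n (sq_nonneg y)]
  have hq3 : L ≤ L * (1 + y ^ 2) := by nlinarith [mul_nonneg hLn (sq_nonneg y)]
  have hq4 : 0 ≤ (1 + m2) / a0 * (1 + y ^ 2) := by positivity
  rw [neg_div] at hlo
  rw [abs_le, add_mul]
  constructor <;> linarith

lemma y2M_integrable {f : ℝ → ℝ} (H : Dens f) {a : ℝ} (ha : 0 < a) :
    Integrable (fun y => (1 + y ^ 2) * M f 0 a y) := by
  have i1 := M_integrable H.int 0 ha
  have i2 := M_integrable H.mom 0 ha
  have i3 := M_integrable H.int 2 ha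
  refine Integrable.mono' ((i1.add (i2.const_mul 2)).add (i3.const_mul 2))
    (Continuous.aestronglyMeasurable (f := fun y : ℝ => 1 + y ^ 2) (by fun_prop) |>.mul
      i1.aestronglyMeasurable) (ae_of_all _ fun y => ?_)
  rw [Real.norm_eq_abs, abs_of_nonneg (mul_nonneg (by positivity) (M0_pos H ha y).le)]
  simp only [Pi.add_apply]
  have : y ^ 2 * M f 0 a y ≤ 2 * M (fun x => x ^ 2 * f x) 0 a y + 2 * M f 2 a y := by
    unfold M
    rw [← integral_const_mul, ← integral_const_mul, ← integral_const_mul, ← integral_add]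
    · refine integral_mono ((mul_mk_integrable H.int 0 ha y).const_mul _)
        (((mul_mk_integrable H.mom 0 ha y).const_mul 2).add
          ((mul_mk_integrable H.int 2 ha y).const_mul 2)) (fun x => ?_)
      simp only [mk, pow_zero, one_mul]
      have h1 : 0 ≤ f x * ph a (y - x) := mul_nonneg (H.nn x) (ph_pos ha _).le
      have h2 : y ^ 2 ≤ 2 * x ^ 2 + 2 * (y - x) ^ 2 := by nlinarith [sq_nonneg (y - 2 * x)]
      have := mul_le_mul_of_nonneg_right h2 h1
      nlinarith
    · exact (mul_mk_integrable H.mom 0 ha y).const_mul 2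
    · exact (mul_mk_integrable H.int 2 ha y).const_mul 2
  linarith

lemma M_CS {f : ℝ → ℝ} (H : Dens f) (k : ℕ) {a : ℝ} (ha : 0 < a) (y : ℝ) :
    (M f k a y) ^ 2 / M f 0 a y ≤ M f (2 * k) a y := by
  have hp := M0_pos H ha y
  set t := M f k a y / M f 0 a y with ht
  have i0 := mul_mk_integrable H.int 0 ha y
  have i1 := mul_mk_integrable H.int k ha y
  have i2 := mul_mk_integrable H.int (2 * k) ha y
  have h : 0 ≤ ∫ x, (f x * mk (2 * k) a (y - x) - 2 * t * (f x * mk k a (y - x))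
      + t ^ 2 * (f x * mk 0 a (y - x))) := by
    apply integral_nonneg
    intro x
    simp only [Pi.zero_apply, mk]
    have h1 : 0 ≤ f x * ph a (y - x) := mul_nonneg (H.nn x) (ph_pos ha _).le
    have := mul_nonneg h1 (sq_nonneg ((y - x) ^ k - t))
    calc _ ≤ _ := this
      _ = _ := by rw [mul_comm 2 k, pow_mul]; ring
  have j1 : Integrable (fun x => f x * mk (2 * k) a (y - x) - 2 * t * (f x * mk k a (y - x))) :=
    i2.sub (i1.const_mul _)
  rw [integral_add j1 (i0.const_mul _), integral_sub i2 (i1.const_mul _),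
    integral_const_mul, integral_const_mul] at h
  change 0 ≤ M f (2 * k) a y - 2 * t * M f k a y + t ^ 2 * M f 0 a y at h
  have e : M f (2 * k) a y - 2 * t * M f k a y + t ^ 2 * M f 0 a y =
    M f (2 * k) a y - (M f k a y) ^ 2 / M f 0 a y := by
    rw [ht]; field_simp; ring
  linarith

/-- Output density and its first three spatial derivatives. -/
noncomputable def P0 (f : ℝ → ℝ) (a y : ℝ) : ℝ := M f 0 a y
noncomputable def P1 (f : ℝ → ℝ) (a y : ℝ) : ℝ := -M f 1 a y / a
noncomputable def P2 (f : ℝ → ℝ) (a y : ℝ) : ℝ := M f 2 a y / a ^ 2 - M f 0 a y / a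
noncomputable def P3 (f : ℝ → ℝ) (a y : ℝ) : ℝ := -M f 3 a y / a ^ 3 + 3 * M f 1 a y / a ^ 2


lemma P0_y {f : ℝ → ℝ} (H : Dens f) {a : ℝ} (ha : 0 < a) (y : ℝ)
    : HasDerivAt (P0 f a) (P1 f a y) y := by
  unfold P0 P1
  refine (M_deriv_y H.int 0 ha y).congr_deriv ?_
  simp; ring

lemma P1_y {f : ℝ → ℝ} (H : Dens f) {a : ℝ} (ha : 0 < a) (y : ℝ)
    : HasDerivAt (P1 f a) (P2 f a y) y := by
  unfold P1 P2
  refine ((M_deriv_y H.int 1 ha y).neg.div_const a).congr_deriv ?_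
  simp; field_simp

lemma P2_y {f : ℝ → ℝ} (H : Dens f) {a : ℝ} (ha : 0 < a) (y : ℝ)
    : HasDerivAt (P2 f a) (P3 f a y) y := by
  unfold P2 P3
  refine (((M_deriv_y H.int 2 ha y).div_const (a ^ 2)).sub
    ((M_deriv_y H.int 0 ha y).div_const a)).congr_deriv ?_
  simp; field_simp; ring

lemma P3_c {f : ℝ → ℝ} (H : Dens f) {a : ℝ} (ha : 0 < a)
    : Continuous (P3 f a) := by
  have h3 : Continuous (M f 3 a) :=
    continuous_iff_continuousAt.mpr fun y => (M_deriv_y H.int 3 ha y).continuousAt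
  have h1 : Continuous (M f 1 a) :=
    continuous_iff_continuousAt.mpr fun y => (M_deriv_y H.int 1 ha y).continuousAt
  unfold P3
  fun_prop

lemma P0_c {f : ℝ → ℝ} (H : Dens f) {a : ℝ} (ha : 0 < a)
    : Continuous (P0 f a) :=
  continuous_iff_continuousAt.mpr fun y => (P0_y H ha y).continuousAt

lemma P1_c {f : ℝ → ℝ} (H : Dens f) {a : ℝ} (ha : 0 < a)
    : Continuous (P1 f a) :=
  continuous_iff_continuousAt.mpr fun y => (P1_y H ha y).continuousAt

lemma P2_c {f : ℝ → ℝ} (H : Dens f) {a : ℝ} (ha : 0 < a)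
    : Continuous (P2 f a) :=
  continuous_iff_continuousAt.mpr fun y => (P2_y H ha y).continuousAt

lemma P0_a {f : ℝ → ℝ} (H : Dens f) {a : ℝ} (ha : 0 < a) (y : ℝ)
    : HasDerivAt (fun a => P0 f a y) (P2 f a y / 2) a := by
  unfold P0 P2
  refine (M_deriv_a H.int 0 ha y).congr_deriv ?_
  simp; field_simp

lemma P1_a {f : ℝ → ℝ} (H : Dens f) {a : ℝ} (ha : 0 < a) (y : ℝ)
    : HasDerivAt (fun a => P1 f a y) (P3 f a y / 2) a := by
  unfold P1 P3
  refine ((M_deriv_a H.int 1 ha y).neg.div (hasDerivAt_id a) ha.ne').congr_deriv ?_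
  simp; field_simp; ring

lemma P0_pos {f : ℝ → ℝ} (H : Dens f) {a : ℝ} (ha : 0 < a) (y : ℝ)
    : 0 < P0 f a y := M0_pos H ha y


/-- Uniform domination of all the quantities needed. -/
lemma P_bounds {f : ℝ → ℝ} (H : Dens f) (a0 a1 : ℝ) (h0 : 0 < a0) (h1 : a0 ≤ a1) :
    ∃ C : ℝ, 0 < C ∧ ∀ a, a0 ≤ a → a ≤ a1 → ∀ y,
      P0 f a y ≤ C * P0 f (2 * a1) y ∧
      P1 f a y ^ 2 / P0 f a y ≤ C * P0 f (2 * a1) y ∧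
      P2 f a y ^ 2 / P0 f a y ≤ C * P0 f (2 * a1) y ∧
      P3 f a y ^ 2 / P0 f a y ≤ C * P0 f (2 * a1) y ∧
      P1 f a y ^ 4 / P0 f a y ^ 3 ≤ C * P0 f (2 * a1) y := by
  obtain ⟨C0, hC0, b0⟩ := M_bound H 0 a0 a1 h0 h1
  obtain ⟨C2, hC2, b2⟩ := M_bound H 2 a0 a1 h0 h1
  obtain ⟨C4, hC4, b4⟩ := M_bound H 4 a0 a1 h0 h1
  obtain ⟨C6, hC6, b6⟩ := M_bound H 6 a0 a1 h0 h1
  set T1 := C2 / a0 ^ 2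
  set T2 := 2 * (C4 / a0 ^ 4 + C0 / a0 ^ 2)
  set T3 := 2 * (C6 / a0 ^ 6 + 9 * C2 / a0 ^ 4)
  set T4 := C4 / a0 ^ 4
  have t1 : 0 < T1 := by positivity
  have t2 : 0 < T2 := by positivity
  have t3 : 0 < T3 := by positivity
  have t4 : 0 < T4 := by positivity
  refine ⟨C0 + T1 + T2 + T3 + T4, by positivity, fun a ha ha' y => ?_⟩
  have hap : 0 < a := by linarith
  have hE : 0 < P0 f (2 * a1) y := P0_pos H (by linarith) y
  have hp : 0 < M f 0 a y := M0_pos H hap y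
  have c1 := M_CS H 1 hap y
  have c2 := M_CS H 2 hap y
  have c3 := M_CS H 3 hap y
  norm_num at c1 c2 c3
  have d0 := (le_abs_self _).trans (b0 a ha ha' y)
  have d2 := (le_abs_self _).trans (b2 a ha ha' y)
  have d4 := (le_abs_self _).trans (b4 a ha ha' y)
  have d6 := (le_abs_self _).trans (b6 a ha ha' y)
  change _ ≤ C0 * P0 f (2 * a1) y at d0
  change _ ≤ C2 * P0 f (2 * a1) y at d2
  change _ ≤ C4 * P0 f (2 * a1) y at d4
  change _ ≤ C6 * P0 f (2 * a1) y at d6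
  set E := P0 f (2 * a1) y
  have key : ∀ T X, 0 < T → T ≤ C0 + T1 + T2 + T3 + T4 → X ≤ T * E →
      X ≤ (C0 + T1 + T2 + T3 + T4) * E := by
    intro T X _ h2 h3
    exact h3.trans (by gcongr)
  have q (j : ℕ) (C m : ℝ) (hC : 0 < C) (hm : m ≤ C * E) : m / a ^ j ≤ C / a0 ^ j * E := by
    calc m / a ^ j ≤ C * E / a ^ j := by gcongr
      _ ≤ C * E / a0 ^ j := by gcongr
      _ = _ := by ring
  have r1 : M f 1 a y ^ 4 / M f 0 a y ^ 3 ≤ M f 4 a y := by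
    have e : M f 1 a y ^ 4 / M f 0 a y ^ 3 = (M f 1 a y ^ 2 / M f 0 a y) ^ 2 / M f 0 a y := by
      field_simp
    rw [e]
    refine le_trans ?_ c2
    have : 0 ≤ M f 1 a y ^ 2 / M f 0 a y := by positivity
    gcongr
  refine ⟨?_, ?_, ?_, ?_, ?_⟩
  · exact key C0 _ hC0 (by linarith) d0
  · refine key T1 _ t1 (by linarith) ?_
    have e : P1 f a y ^ 2 / P0 f a y = (M f 1 a y ^ 2 / M f 0 a y) / a ^ 2 := by
      unfold P1 P0; field_simp
    rw [e]
    exact q 2 C2 _ hC2 (c1.trans d2)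
  · refine key T2 _ t2 (by linarith) ?_
    have e : P2 f a y ^ 2 / P0 f a y ≤
        2 * ((M f 2 a y ^ 2 / M f 0 a y) / a ^ 4 + M f 0 a y / a ^ 2) := by
      have : 2 * ((M f 2 a y ^ 2 / M f 0 a y) / a ^ 4 + M f 0 a y / a ^ 2) - P2 f a y ^ 2 / P0 f a y
        = (M f 2 a y / a ^ 2 + M f 0 a y / a) ^ 2 / M f 0 a y := by
        unfold P2 P0; field_simp; ring
      have : 0 ≤ (M f 2 a y / a ^ 2 + M f 0 a y / a) ^ 2 / M f 0 a y := by positivity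
      linarith
    have := q 4 C4 _ hC4 (c2.trans d4)
    have := q 2 C0 _ hC0 d0
    calc _ ≤ _ := e
      _ ≤ 2 * (C4 / a0 ^ 4 * E + C0 / a0 ^ 2 * E) := by linarith
      _ = _ := by ring
  · refine key T3 _ t3 (by linarith) ?_
    have e : P3 f a y ^ 2 / P0 f a y ≤
        2 * ((M f 3 a y ^ 2 / M f 0 a y) / a ^ 6 + 9 * ((M f 1 a y ^ 2 / M f 0 a y) / a ^ 4)) := by
      have : 2 * ((M f 3 a y ^ 2 / M f 0 a y) / a ^ 6 + 9 * ((M f 1 a y ^ 2 / M f 0 a y) / a ^ 4))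
          - P3 f a y ^ 2 / P0 f a y
        = (M f 3 a y / a ^ 3 + 3 * M f 1 a y / a ^ 2) ^ 2 / M f 0 a y := by
        unfold P3 P0; field_simp; ring
      have : 0 ≤ (M f 3 a y / a ^ 3 + 3 * M f 1 a y / a ^ 2) ^ 2 / M f 0 a y := by positivity
      linarith
    have := q 6 C6 _ hC6 (c3.trans d6)
    have := q 4 C2 _ hC2 (c1.trans d2)
    calc _ ≤ _ := e
      _ ≤ 2 * (C6 / a0 ^ 6 * E + 9 * (C2 / a0 ^ 4 * E)) := by linarith
      _ = _ := by ring
  · refine key T4 _ t4 (by linarith) ?_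
    have e : P1 f a y ^ 4 / P0 f a y ^ 3 = (M f 1 a y ^ 4 / M f 0 a y ^ 3) / a ^ 4 := by
      unfold P1 P0; field_simp
    rw [e]
    exact q 4 C4 _ hC4 (r1.trans d4)

lemma am {p u v D : ℝ} (hp : 0 < p) (hu : u ^ 2 / p ≤ D) (hv : v ^ 2 / p ≤ D) :
    |u * v / p| ≤ D := by
  rw [div_le_iff₀ hp] at hu hv
  rw [abs_div, abs_of_pos hp, div_le_iff₀ hp, abs_le]
  constructor <;> nlinarith [sq_nonneg (u - v), sq_nonneg (u + v)]

lemma real_bounds {p p1 p2 p3 D : ℝ} (hp : 0 < p) (b0 : p ≤ D) (b1 : p1 ^ 2 / p ≤ D)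
    (b2 : p2 ^ 2 / p ≤ D) (b3 : p3 ^ 2 / p ≤ D) (b4 : p1 ^ 4 / p ^ 3 ≤ D) :
    |p1| ≤ D ∧ |p2| ≤ D ∧ |p1 * p3 / p| ≤ D ∧ |p1 * p2 / p| ≤ D ∧ |p1 ^ 2 * p2 / p ^ 2| ≤ D ∧
      |p1 ^ 3 / p ^ 2| ≤ D ∧ |p1 ^ 2 / p| ≤ D ∧ |p2 ^ 2 / p| ≤ D ∧ |p1 ^ 4 / p ^ 3| ≤ D := by
  have b0' : p ^ 2 / p ≤ D := by
    have : p ^ 2 / p = p := by field_simp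
    rwa [this]
  have b4' : (p1 ^ 2 / p) ^ 2 / p ≤ D := by
    have : (p1 ^ 2 / p) ^ 2 / p = p1 ^ 4 / p ^ 3 := by field_simp
    rwa [this]
  refine ⟨?_, ?_, am hp b1 b3, am hp b1 b2, ?_, ?_, ?_, ?_, ?_⟩
  · have := am hp b1 b0'
    rwa [mul_div_assoc, div_self hp.ne', mul_one] at this
  · have := am hp b2 b0'
    rwa [mul_div_assoc, div_self hp.ne', mul_one] at this
  · have := am hp b4' b2
    have e : p1 ^ 2 / p * p2 / p = p1 ^ 2 * p2 / p ^ 2 := by field_simp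
    rwa [e] at this
  · have := am hp b4' b1
    have e : p1 ^ 2 / p * p1 / p = p1 ^ 3 / p ^ 2 := by field_simp
    rwa [e] at this
  · rw [abs_of_nonneg (by positivity)]; exact b1
  · rw [abs_of_nonneg (by positivity)]; exact b2
  · rw [abs_of_nonneg (by positivity)]; exact b4

/-- Fisher information. -/
noncomputable def J (f : ℝ → ℝ) (a : ℝ) : ℝ := ∫ y, P1 f a y ^ 2 / P0 f a y


lemma exists_dom {f : ℝ → ℝ} (H : Dens f) {a : ℝ} (ha : 0 < a)
    : ∃ D : ℝ → ℝ, Integrable D ∧ Integrable (fun y => (1 + y ^ 2) * D y) ∧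
    ∀ b ∈ Set.Icc (a / 2) (2 * a), ∀ y,
      P0 f b y ≤ D y ∧ P1 f b y ^ 2 / P0 f b y ≤ D y ∧ P2 f b y ^ 2 / P0 f b y ≤ D y ∧
      P3 f b y ^ 2 / P0 f b y ≤ D y ∧ P1 f b y ^ 4 / P0 f b y ^ 3 ≤ D y := by
  obtain ⟨C, hC, h⟩ := P_bounds H (a / 2) (2 * a) (by positivity) (by linarith)
  refine ⟨fun y => C * P0 f (2 * (2 * a)) y, ?_, ?_, fun b hb y => h b hb.1 hb.2 y⟩
  · exact (M_integrable H.int 0 (by positivity)).const_mul C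
  · have := (y2M_integrable H (a := 2 * (2 * a)) (by positivity)).const_mul C
    refine this.congr (ae_of_all _ fun y => ?_)
    simp only [P0]; ring

lemma h_deriv0 {f : ℝ → ℝ} (H : Dens f) {a : ℝ} (ha : 0 < a)
    : Integrable (fun y => P2 f a y / 2 * (Real.log (P0 f a y) + 1)) ∧
    Integrable (fun y => P1 f a y * (Real.log (P0 f a y) + 1)) ∧
    HasDerivAt (fun b => ∫ y, P0 f b y * Real.log (P0 f b y))
      (∫ y, P2 f a y / 2 * (Real.log (P0 f a y) + 1)) a := by
  obtain ⟨D, hD, hD2, hd⟩ := exists_dom H ha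
  obtain ⟨C, hC, hl⟩ := logM_bound H (a / 2) (2 * a) (by positivity) (by linarith)
  have hev : ∀ᶠ b in nhds a, 0 < b := lt_mem_nhds ha
  have hmem : a ∈ Set.Icc (a / 2) (2 * a) := ⟨by linarith, by linarith⟩
  have hlogc : ∀ b, 0 < b → Continuous (fun y => Real.log (P0 f b y)) := fun b hb =>
    (P0_c H hb).log (fun y => (P0_pos H hb y).ne')
  have hB : Integrable (fun y => (C + 1) * ((1 + y ^ 2) * D y)) := hD2.const_mul _
  have hDn : ∀ y, 0 ≤ D y := fun y => (P0_pos H ha y).le.trans (hd a hmem y).1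
  have hlog1 : ∀ b ∈ Set.Icc (a / 2) (2 * a), ∀ y, |Real.log (P0 f b y) + 1| ≤
      (C + 1) * (1 + y ^ 2) := by
    intro b hb y
    have := hl b hb.1 hb.2 y
    change |Real.log (P0 f b y)| ≤ _ at this
    calc _ ≤ |Real.log (P0 f b y)| + |1| := abs_add_le _ _
      _ ≤ C * (1 + y ^ 2) + 1 := by rw [abs_one]; linarith
      _ ≤ _ := by nlinarith [sq_nonneg y]
  have hbd : ∀ b ∈ Set.Icc (a / 2) (2 * a), ∀ y, ∀ X, |X| ≤ D y →
      |X * (Real.log (P0 f b y) + 1)| ≤ (C + 1) * ((1 + y ^ 2) * D y) := by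
    intro b hb y X hX
    rw [abs_mul]
    calc _ ≤ D y * ((C + 1) * (1 + y ^ 2)) := by
          have := hlog1 b hb y
          have := hDn y
          gcongr
      _ = _ := by ring
  have hb2 : ∀ b ∈ Set.Icc (a / 2) (2 * a), ∀ y, |P1 f b y| ≤ D y ∧ |P2 f b y / 2| ≤ D y := by
    intro b hb y
    have hb0 : 0 < b := by have := hb.1; linarith
    obtain ⟨q0, q1, q2, q3, q4⟩ := hd b hb y
    have r := real_bounds (P0_pos H hb0 y) q0 q1 q2 q3 q4
    refine ⟨r.1, ?_⟩
    rw [abs_div, abs_two]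
    have := r.2.1
    have := hDn y
    linarith
  have key := hasDerivAt_integral_of_dominated_loc_of_deriv_le (μ := volume) (x₀ := a)
    (s := Set.Icc (a / 2) (2 * a))
    (F := fun b y => P0 f b y * Real.log (P0 f b y))
    (F' := fun b y => P2 f b y / 2 * (Real.log (P0 f b y) + 1))
    (bound := fun y => (C + 1) * ((1 + y ^ 2) * D y))
    (Icc_mem_nhds (by linarith) (by linarith))
    (hev.mono (fun b hb => ((P0_c H hb).mul (hlogc b hb)).aestronglyMeasurable))
    (by
      refine Integrable.mono' hB ((P0_c H ha).mul (hlogc a ha)).aestronglyMeasurable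
        (ae_of_all _ fun y => ?_)
      rw [Real.norm_eq_abs, abs_mul]
      have h1 := hl a hmem.1 hmem.2 y
      change |Real.log (P0 f a y)| ≤ _ at h1
      have h2 := (hd a hmem y).1
      have h3 := P0_pos H ha y
      rw [abs_of_pos h3]
      have := hDn y
      calc _ ≤ D y * (C * (1 + y ^ 2)) := by gcongr
        _ ≤ D y * ((C + 1) * (1 + y ^ 2)) := by gcongr; linarith
        _ = _ := by ring)
    ((((P2_c H ha).div_const 2).mul ((hlogc a ha).add continuous_const)).aestronglyMeasurable)
    (ae_of_all _ (fun y b hb => by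
      rw [Real.norm_eq_abs]
      exact hbd b hb y _ (hb2 b hb y).2))
    hB
    (ae_of_all _ (fun y b hb => by
      have hb0 : 0 < b := by have := hb.1; linarith
      have h1 := P0_a H hb0 y
      have hp := P0_pos H hb0 y
      refine (h1.mul (h1.log hp.ne')).congr_deriv ?_
      field_simp))
  refine ⟨key.1, ?_, key.2⟩
  refine Integrable.mono' hB ((P1_c H ha).mul ((hlogc a ha).add
    continuous_const)).aestronglyMeasurable (ae_of_all _ fun y => ?_)
  exact hbd a hmem y _ (hb2 a hmem y).1

lemma ints {f : ℝ → ℝ} (H : Dens f) {a : ℝ} (ha : 0 < a)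
    : Integrable (P1 f a) ∧ Integrable (P2 f a) ∧
    Integrable (fun y => P1 f a y * P3 f a y / P0 f a y) ∧
    Integrable (fun y => P1 f a y * P2 f a y / P0 f a y) ∧
    Integrable (fun y => P1 f a y ^ 2 * P2 f a y / P0 f a y ^ 2) ∧
    Integrable (fun y => P1 f a y ^ 3 / P0 f a y ^ 2) ∧
    Integrable (fun y => P1 f a y ^ 2 / P0 f a y) ∧
    Integrable (fun y => P2 f a y ^ 2 / P0 f a y) ∧
    Integrable (fun y => P1 f a y ^ 4 / P0 f a y ^ 3) := by
  obtain ⟨D, hD, hD2, hd⟩ := exists_dom H ha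
  have hmem : a ∈ Set.Icc (a / 2) (2 * a) := ⟨by linarith, by linarith⟩
  have r := fun y => real_bounds (P0_pos H ha y) (hd a hmem y).1 (hd a hmem y).2.1
    (hd a hmem y).2.2.1 (hd a hmem y).2.2.2.1 (hd a hmem y).2.2.2.2
  have c0 := P0_c H ha
  have c1 := P1_c H ha
  have c2 := P2_c H ha
  have c3 := P3_c H ha
  have hne : ∀ y, P0 f a y ≠ 0 := fun y => (P0_pos H ha y).ne'
  refine ⟨?_, ?_, ?_, ?_, ?_, ?_, ?_, ?_, ?_⟩
  · exact Integrable.mono' hD c1.aestronglyMeasurable (ae_of_all _ fun y => (r y).1)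
  · exact Integrable.mono' hD c2.aestronglyMeasurable (ae_of_all _ fun y => (r y).2.1)
  · exact Integrable.mono' hD ((c1.mul c3).div c0 hne).aestronglyMeasurable
      (ae_of_all _ fun y => (r y).2.2.1)
  · exact Integrable.mono' hD ((c1.mul c2).div c0 hne).aestronglyMeasurable
      (ae_of_all _ fun y => (r y).2.2.2.1)
  · exact Integrable.mono' hD (((c1.pow 2).mul c2).div (c0.pow 2)
      fun y => pow_ne_zero _ (hne y)).aestronglyMeasurable
      (ae_of_all _ fun y => (r y).2.2.2.2.1)
  · exact Integrable.mono' hD ((c1.pow 3).div (c0.pow 2)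
      fun y => pow_ne_zero _ (hne y)).aestronglyMeasurable
      (ae_of_all _ fun y => (r y).2.2.2.2.2.1)
  · exact Integrable.mono' hD ((c1.pow 2).div c0 hne).aestronglyMeasurable
      (ae_of_all _ fun y => (r y).2.2.2.2.2.2.1)
  · exact Integrable.mono' hD ((c2.pow 2).div c0 hne).aestronglyMeasurable
      (ae_of_all _ fun y => (r y).2.2.2.2.2.2.2.1)
  · exact Integrable.mono' hD ((c1.pow 4).div (c0.pow 3)
      fun y => pow_ne_zero _ (hne y)).aestronglyMeasurable
      (ae_of_all _ fun y => (r y).2.2.2.2.2.2.2.2)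

/-- de Bruijn's identity. -/
lemma deBruijn {f : ℝ → ℝ} (H : Dens f) {a : ℝ} (ha : 0 < a)
    : HasDerivAt (fun b => ∫ y, P0 f b y * Real.log (P0 f b y)) (-(J f a) / 2) a := by
  obtain ⟨i1, i2, hd⟩ := h_deriv0 H ha
  refine hd.congr_deriv ?_
  have iJ := (ints H ha).2.2.2.2.2.2.1
  have i1' : Integrable (fun y => 2 * (P2 f a y / 2 * (Real.log (P0 f a y) + 1))) := i1.const_mul 2
  have z := integral_eq_zero_of_hasDerivAt_of_integrable
    (f := fun y => P1 f a y * (Real.log (P0 f a y) + 1))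
    (f' := fun y => 2 * (P2 f a y / 2 * (Real.log (P0 f a y) + 1)) + P1 f a y ^ 2 / P0 f a y)
    (fun y => by
      have hp := P0_pos H ha y
      refine ((P1_y H ha y).mul (((P0_y H ha y).log hp.ne').add_const 1)).congr_deriv ?_
      field_simp) (i1'.add iJ) i2
  rw [integral_add i1' iJ, integral_const_mul] at z
  unfold J
  linarith

lemma J_deriv0 {f : ℝ → ℝ} (H : Dens f) {a : ℝ} (ha : 0 < a)
    : HasDerivAt (J f)
    (∫ y, (P1 f a y * P3 f a y / P0 f a y - P1 f a y ^ 2 * P2 f a y / P0 f a y ^ 2 / 2)) a := by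
  obtain ⟨D, hD, hD2, hd⟩ := exists_dom H ha
  have hev : ∀ᶠ b in nhds a, 0 < b := lt_mem_nhds ha
  have I := ints H ha
  have key := hasDerivAt_integral_of_dominated_loc_of_deriv_le (μ := volume) (x₀ := a)
    (s := Set.Icc (a / 2) (2 * a))
    (F := fun b y => P1 f b y ^ 2 / P0 f b y)
    (F' := fun b y => P1 f b y * P3 f b y / P0 f b y - P1 f b y ^ 2 * P2 f b y / P0 f b y ^ 2 / 2)
    (bound := fun y => 2 * D y)
    (Icc_mem_nhds (by linarith) (by linarith))
    (hev.mono (fun b hb => (ints H hb).2.2.2.2.2.2.1.aestronglyMeasurable))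
    I.2.2.2.2.2.2.1
    (I.2.2.1.sub (I.2.2.2.2.1.div_const 2)).aestronglyMeasurable
    (ae_of_all _ (fun y b hb => by
      have hb0 : 0 < b := by have := hb.1; linarith
      obtain ⟨q0, q1, q2, q3, q4⟩ := hd b hb y
      have r := real_bounds (P0_pos H hb0 y) q0 q1 q2 q3 q4
      have r1 := r.2.2.1
      have r2 := r.2.2.2.2.1
      rw [Real.norm_eq_abs]
      refine (abs_sub _ _).trans ?_
      rw [abs_div _ (2 : ℝ), abs_two]
      have := abs_nonneg (P1 f b y * P3 f b y / P0 f b y)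
      linarith))
    (hD.const_mul 2)
    (ae_of_all _ (fun y b hb => by
      have hb0 : 0 < b := by have := hb.1; linarith
      have hp := P0_pos H hb0 y
      refine (((P1_a H hb0 y).pow 2).div (P0_a H hb0 y) hp.ne').congr_deriv ?_
      simp only [Pi.pow_apply]
      field_simp
      ring))
  exact key.2

/-- The Fisher information satisfies `J' ≤ -J^2`. -/
lemma J_deriv {f : ℝ → ℝ} (H : Dens f) {a : ℝ} (ha : 0 < a)
    : ∃ J', HasDerivAt (J f) J' a ∧ J' ≤ -(J f a) ^ 2 := by
  refine ⟨_, J_deriv0 H ha, ?_⟩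
  obtain ⟨i1, i2, i13, i12, i112, i111, iJ, i22, i1111⟩ := ints H ha
  have i0 : Integrable (P0 f a) := M_integrable H.int 0 ha
  have hne : ∀ y, P0 f a y ≠ 0 := fun y => (P0_pos H ha y).ne'
  set A := ∫ y, P2 f a y ^ 2 / P0 f a y with hA
  set B := ∫ y, P1 f a y ^ 2 * P2 f a y / P0 f a y ^ 2 with hB
  set E := ∫ y, P1 f a y ^ 4 / P0 f a y ^ 3 with hE
  set G := ∫ y, P1 f a y * P3 f a y / P0 f a y with hG
  have z1 : ∫ y, P2 f a y = 0 :=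
    integral_eq_zero_of_hasDerivAt_of_integrable (P1_y H ha) i2 i1
  have z2 : G + A - B = 0 := by
    have j1 : Integrable (fun y => P1 f a y * P3 f a y / P0 f a y + P2 f a y ^ 2 / P0 f a y) :=
      i13.add i22
    have z := integral_eq_zero_of_hasDerivAt_of_integrable
      (f := fun y => P1 f a y * P2 f a y / P0 f a y)
      (f' := fun y => P1 f a y * P3 f a y / P0 f a y + P2 f a y ^ 2 / P0 f a y
        - P1 f a y ^ 2 * P2 f a y / P0 f a y ^ 2)
      (fun y => by
        have hp := hne y
        refine (((P1_y H ha y).mul (P2_y H ha y)).div (P0_y H ha y) hp).congr_deriv ?_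
        simp only [Pi.mul_apply]
        field_simp
        ring) (j1.sub i112) i12
    rwa [integral_sub j1 i112, integral_add i13 i22] at z
  have z3 : 3 * B - 2 * E = 0 := by
    have z := integral_eq_zero_of_hasDerivAt_of_integrable
      (f := fun y => P1 f a y ^ 3 / P0 f a y ^ 2)
      (f' := fun y => 3 * (P1 f a y ^ 2 * P2 f a y / P0 f a y ^ 2)
        - 2 * (P1 f a y ^ 4 / P0 f a y ^ 3))
      (fun y => by
        have hp := hne y
        refine (((P1_y H ha y).pow 3).div ((P0_y H ha y).pow 2)
          (pow_ne_zero _ hp)).congr_deriv ?_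
        simp
        field_simp) ((i112.const_mul 3).sub (i1111.const_mul 2)) i111
    rwa [integral_sub (i112.const_mul 3) (i1111.const_mul 2), integral_const_mul,
      integral_const_mul] at z
  have z4 : ∫ y, P0 f a y = 1 := (M_integral H.int ha).trans H.one
  set K := J f a with hK
  have hJ : ∫ y, P1 f a y ^ 2 / P0 f a y = K := rfl
  have pos : 0 ≤ ∫ y, (P2 f a y - P1 f a y ^ 2 / P0 f a y + K * P0 f a y) ^ 2 / P0 f a y :=
    integral_nonneg fun y => div_nonneg (sq_nonneg _) (P0_pos H ha y).le
  have e : ∫ y, (P2 f a y - P1 f a y ^ 2 / P0 f a y + K * P0 f a y) ^ 2 / P0 f a y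
      = A - 2 * B + E + 2 * K * 0 - 2 * K * K + K ^ 2 * 1 := by
    have e1 : ∀ y, (P2 f a y - P1 f a y ^ 2 / P0 f a y + K * P0 f a y) ^ 2 / P0 f a y
      = P2 f a y ^ 2 / P0 f a y - 2 * (P1 f a y ^ 2 * P2 f a y / P0 f a y ^ 2)
        + P1 f a y ^ 4 / P0 f a y ^ 3 + 2 * K * P2 f a y - 2 * K * (P1 f a y ^ 2 / P0 f a y)
        + K ^ 2 * P0 f a y := by
      intro y
      have hp := hne y
      field_simp
      ring
    simp_rw [e1]
    have k1 : Integrable (fun y => P2 f a y ^ 2 / P0 f a y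
      - 2 * (P1 f a y ^ 2 * P2 f a y / P0 f a y ^ 2)) := i22.sub (i112.const_mul 2)
    have k2 : Integrable (fun y => P2 f a y ^ 2 / P0 f a y
      - 2 * (P1 f a y ^ 2 * P2 f a y / P0 f a y ^ 2) + P1 f a y ^ 4 / P0 f a y ^ 3) := k1.add i1111
    have k3 : Integrable (fun y => P2 f a y ^ 2 / P0 f a y
      - 2 * (P1 f a y ^ 2 * P2 f a y / P0 f a y ^ 2) + P1 f a y ^ 4 / P0 f a y ^ 3
      + 2 * K * P2 f a y) := k2.add (i2.const_mul _)
    have k4 : Integrable (fun y => P2 f a y ^ 2 / P0 f a y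
      - 2 * (P1 f a y ^ 2 * P2 f a y / P0 f a y ^ 2) + P1 f a y ^ 4 / P0 f a y ^ 3
      + 2 * K * P2 f a y - 2 * K * (P1 f a y ^ 2 / P0 f a y)) := k3.sub (iJ.const_mul _)
    rw [integral_add k4 (i0.const_mul _), integral_sub k3 (iJ.const_mul _),
      integral_add k2 (i2.const_mul _), integral_add k1 i1111,
      integral_sub i22 (i112.const_mul 2)]
    simp only [integral_const_mul]
    rw [z1, z4, hJ]
  rw [integral_sub i13 (i112.div_const 2), integral_div]
  change G - B / 2 ≤ _
  nlinarith

/-- Adding Gaussian noise does not decrease the entropy. -/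
lemma ent_mono {f : ℝ → ℝ} (H : Dens f) {a : ℝ} (ha : 0 < a)
    (hent : Integrable (fun x => f x * Real.log (f x))) :
    ∫ y, P0 f a y * Real.log (P0 f a y) ≤ ∫ x, f x * Real.log (f x) := by
  rw [← M_integral hent ha]
  have hint : Integrable (fun y => P0 f a y * Real.log (P0 f a y)) := by
    obtain ⟨C, hC, hl⟩ := logM_bound H a a ha le_rfl
    have hlogc : Continuous (fun y => Real.log (P0 f a y)) :=
      (P0_c H ha).log (fun y => (P0_pos H ha y).ne')
    refine Integrable.mono' ((y2M_integrable H ha).const_mul C)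
      ((P0_c H ha).mul hlogc).aestronglyMeasurable (ae_of_all _ fun y => ?_)
    rw [Real.norm_eq_abs, abs_mul, abs_of_pos (P0_pos H ha y)]
    have := mul_le_mul_of_nonneg_left (hl a le_rfl le_rfl y) (P0_pos H ha y).le
    calc _ ≤ _ := this
      _ = _ := by unfold P0; ring
  refine integral_mono hint (M_integrable hent 0 ha) (fun y => ?_)
  set s := P0 f a y with hs
  have hsp : 0 < s := P0_pos H ha y
  have ik : Integrable (fun x => mk 0 a (y - x)) := (mk_integrable 0 ha).comp_sub_left y
  have i1 := mul_mk_integrable H.int 0 ha y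
  have e1 : ∫ x, mk 0 a (y - x) = 1 := by
    rw [integral_sub_left_eq_self (mk 0 a) volume y]
    simp only [mk_zero]; exact ph_integral ha
  have e : s * Real.log s
      = ∫ x, ((1 + Real.log s) * (f x * mk 0 a (y - x)) - s * mk 0 a (y - x)) := by
    rw [integral_sub (i1.const_mul _) (ik.const_mul _), integral_const_mul, integral_const_mul, e1]
    change _ = (1 + Real.log s) * s - s * 1
    ring
  simp only
  rw [e]
  refine integral_mono ((i1.const_mul _).sub (ik.const_mul _)) (mul_mk_integrable hent 0 ha y)
    (fun x => ?_)
  simp only [mk_zero]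
  have hph := ph_pos ha (y - x)
  have tang : (1 + Real.log s) * f x - s ≤ f x * Real.log (f x) := by
    rcases (H.nn x).eq_or_lt with h0 | h0
    · rw [← h0]; simp; exact hsp.le
    · have := Real.log_le_sub_one_of_pos (div_pos hsp h0)
      rw [Real.log_div hsp.ne' h0.ne'] at this
      have h2 := mul_le_mul_of_nonneg_left this h0.le
      have h3 : f x * (s / f x - 1) = s - f x := by field_simp
      rw [h3] at h2
      linarith
  have := mul_le_mul_of_nonneg_right tang hph.le
  calc _ = ((1 + Real.log s) * f x - s) * ph a (y - x) := by ring
    _ ≤ _ := this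
    _ = _ := by ring


/-- Concavity of the entropy power. -/
lemma N_concave {f : ℝ → ℝ} (H : Dens f) :
    ConcaveOn ℝ (Set.Ioi (0 : ℝ))
      (fun a => Real.exp (-2 * ∫ y, P0 f a y * Real.log (P0 f a y))) := by
  set g := fun a => Real.exp (-2 * ∫ y, P0 f a y * Real.log (P0 f a y)) with hg
  have d1 : ∀ a, 0 < a → HasDerivAt g (g a * J f a) a := by
    intro a ha
    refine (((deBruijn H ha).const_mul (-2)).exp).congr_deriv ?_
    simp only [hg]
    ring
  choose! J' hJ' hle using fun a (ha : 0 < a) => J_deriv H ha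
  have d2 : ∀ a, 0 < a → HasDerivAt (fun a => g a * J f a) (g a * J f a * J f a + g a * J' a) a :=
    fun a ha => (d1 a ha).mul (hJ' a ha)
  refine concaveOn_of_hasDerivWithinAt2_nonpos (f' := fun a => g a * J f a)
    (f'' := fun a => g a * J f a * J f a + g a * J' a) (convex_Ioi 0)
    (fun a ha => (d1 a ha).continuousAt.continuousWithinAt) ?_ ?_ ?_
  · rw [interior_Ioi]; exact fun a ha => (d1 a ha).hasDerivWithinAt
  · rw [interior_Ioi]; exact fun a ha => (d2 a ha).hasDerivWithinAt
  · rw [interior_Ioi]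
    intro a ha
    have hgp : 0 < g a := Real.exp_pos _
    have := hle a ha
    have h2 : g a * (J f a * J f a + J' a) ≤ 0 :=
      mul_nonpos_of_nonneg_of_nonpos hgp.le (by nlinarith)
    calc _ = g a * (J f a * J f a + J' a) := by ring
      _ ≤ 0 := h2

end CostaEPI


/-- **Costa's entropy power inequality (interpolation form).** For the additive
Gaussian noise channel, the entropy power of `X + √a·W` dominates the linear
interpolation between the entropy powers of `X` and `X + W`:
`N(a) ≥ (1−a)·N(0) + a·N(1)` for all `a ∈ [0,1]`. -/
theorem costa_epi_interpolation
    (fX : ℝ → ℝ)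
    (hfX_nonneg : ∀ x, 0 ≤ fX x)
    (hfX_prob : (∫ x, fX x) = 1)
    (hfX_mom : Integrable (fun x => x ^ 2 * fX x))
    (hfX_ent : Integrable (fun x => fX x * Real.log (fX x)))
    (fY : ℝ → ℝ → ℝ)
    (hfY : ∀ b, 0 < b → ∀ y, fY b y =
      ∫ x, fX x * ((Real.sqrt (2 * Real.pi * b))⁻¹ *
        Real.exp (-(y - x) ^ 2 / (2 * b))))
    (h : ℝ → ℝ)
    (hh0 : h 0 = -∫ x, fX x * Real.log (fX x))
    (hhb : ∀ b, 0 < b → h b = -∫ y, fY b y * Real.log (fY b y))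
    (N : ℝ → ℝ)
    (hN : ∀ b, N b = (2 * Real.pi * Real.exp 1)⁻¹ * Real.exp (2 * h b)) :
    ∀ a ∈ Set.Icc (0 : ℝ) 1, N a ≥ (1 - a) * N 0 + a * N 1 := by
  have hfint : Integrable fX := by
    by_contra hc
    rw [integral_undef hc] at hfX_prob
    exact zero_ne_one hfX_prob
  have H : CostaEPI.Dens fX := ⟨hfX_nonneg, hfint, hfX_prob, hfX_mom⟩
  have hP : ∀ b, 0 < b → fY b = CostaEPI.P0 fX b := by
    intro b hb
    funext y
    rw [hfY b hb y]
    simp only [CostaEPI.P0, CostaEPI.M, CostaEPI.mk_zero, CostaEPI.ph]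
  set g := fun a => Real.exp (-2 * ∫ y, CostaEPI.P0 fX a y * Real.log (CostaEPI.P0 fX a y)) with hg
  have hconc : ConcaveOn ℝ (Set.Ioi (0 : ℝ)) g := CostaEPI.N_concave H
  set c := (2 * Real.pi * Real.exp 1)⁻¹ with hc
  have hcp : 0 < c := by positivity
  have hNb : ∀ b, 0 < b → N b = c * g b := by
    intro b hb
    rw [hN, hhb b hb, hP b hb]
    simp only [hg]
    congr 2
    ring
  have hN0 : ∀ b, 0 < b → N 0 ≤ N b := by
    intro b hb
    rw [hN, hN, hh0, hhb b hb, hP b hb]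
    have := CostaEPI.ent_mono H hb hfX_ent
    gcongr
  intro a ha
  rcases ha.1.eq_or_lt with h0 | h0
  · rw [← h0]; simp
  rcases ha.2.eq_or_lt with h1 | h1
  · rw [h1]; simp
  have hineq : ∀ e, 0 < e → e < a → (1 - a) / (1 - e) * N 0 + (a - e) / (1 - e) * N 1 ≤ N a := by
    intro e he hea
    have hd : 0 < 1 - e := by linarith
    have hsum : (1 - a) / (1 - e) + (a - e) / (1 - e) = 1 := by
      field_simp; ring
    have hmem0 : e ∈ Set.Ioi (0 : ℝ) := he
    have hmem1 : (1 : ℝ) ∈ Set.Ioi (0 : ℝ) := Set.mem_Ioi.mpr one_pos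
    have h := hconc.2 hmem0 hmem1
      (div_nonneg (by linarith : 0 ≤ 1 - a) hd.le) (div_nonneg (by linarith : 0 ≤ a - e) hd.le) hsum
    have he' : (1 - a) / (1 - e) * e + (a - e) / (1 - e) * 1 = a := by field_simp; ring
    simp only [smul_eq_mul] at h
    rw [he'] at h
    have hn := hN0 e he
    have h2 := mul_le_mul_of_nonneg_left h hcp.le
    have h3 := mul_le_mul_of_nonneg_left hn (div_nonneg (by linarith : 0 ≤ 1 - a) hd.le)
    rw [hNb e he] at h3
    rw [hNb a h0, hNb 1 one_pos]
    linarith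
  have hcont : Tendsto (fun e : ℝ => (1 - a) / (1 - e) * N 0 + (a - e) / (1 - e) * N 1)
      (nhdsWithin 0 (Set.Ioi 0)) (nhds ((1 - a) * N 0 + a * N 1)) := by
    have : ContinuousAt (fun e : ℝ => (1 - a) / (1 - e) * N 0 + (a - e) / (1 - e) * N 1) 0 := by
      have h1 : (1 : ℝ) - 0 ≠ 0 := by norm_num
      fun_prop (disch := simpa using h1)
    have h2 := this.tendsto.mono_left (nhdsWithin_le_nhds (s := Set.Ioi 0))
    simpa using h2
  refine le_of_tendsto hcont ?_
  filter_upwards [Ioo_mem_nhdsGT h0] with e he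
  exact hineq e he.1 he.2
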